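/- The parented a-graph G*_uv (the order-12 a-graph G* obtained by deleting the edge uv of the icosahedron, with the pair (u,v) of opposite boundary vertices designated) does not belong to the family A*: each of the two Kempe equivalence classes of its coloring states contains both a state with c(u) = c(v) and a state with c(u) ≠ c(v), i.e., both classes are n-s classes. -/

import Mathlib

open SimpleGraph

/-- A proper vertex-coloring of `G` using at most 4 colors. -/
def IsProper4Coloring {V : Type} (G : SimpleGraph V) (c : V → Fin 4) : Prop :=
  ∀ a b : V, G.Adj a b → c a ≠ c b

/-- The degree of a vertex, as the number of its neighbours. -/
noncomputable def vdeg {V : Type} (G : SimpleGraph V) (w : V) : ℕ :=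
  (G.neighborSet w).ncard

/-- A (combinatorial) planar triangulation: a connected simple graph together with its
set of triangular faces, every edge lying on exactly two faces, satisfying Euler's
formula `v - e + f = 2`. -/
structure PlanarTriangulation (V : Type) [Fintype V] [DecidableEq V] where
  graph : SimpleGraph V
  connected : graph.Connected
  faces : Finset (Finset V)
  faces_card : ∀ f ∈ faces, f.card = 3
  faces_adj : ∀ f ∈ faces, ∀ a ∈ f, ∀ b ∈ f, a ≠ b → graph.Adj a b
  edge_faces : ∀ a b : V, graph.Adj a b →
    (faces.filter fun f => a ∈ f ∧ b ∈ f).card = 2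
  euler : (Fintype.card V : ℤ) - (graph.edgeSet.ncard : ℤ) + (faces.card : ℤ) = 2

/-- An a-graph: a near-triangulation of the plane whose unique non-triangular face is a
4-face with boundary cycle `u x v y`, the pairs `(x,y)` and `(u,v)` being the two pairs
of opposite (non-adjacent) boundary vertices.  All other faces are triangles, every
edge lies on exactly two faces (boundary edges lie on one triangle and the 4-face), and
Euler's formula holds. -/
structure AGraph (V : Type) [Fintype V] [DecidableEq V] where
  graph : SimpleGraph V
  connected : graph.Connected
  u : V
  x : V
  v : V
  y : V
  adj_ux : graph.Adj u x
  adj_xv : graph.Adj x v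
  adj_vy : graph.Adj v y
  adj_yu : graph.Adj y u
  not_adj_xy : ¬ graph.Adj x y
  not_adj_uv : ¬ graph.Adj u v
  x_ne_y : x ≠ y
  u_ne_v : u ≠ v
  faces : Finset (Finset V)
  faces_card : ∀ f ∈ faces, f.card = 3
  faces_adj : ∀ f ∈ faces, ∀ a ∈ f, ∀ b ∈ f, a ≠ b → graph.Adj a b
  edge_faces : ∀ a b : V, graph.Adj a b →
    (faces.filter fun f => a ∈ f ∧ b ∈ f).card =
      (if ({a, b} : Finset V) ∈ ({{u, x}, {x, v}, {v, y}, {y, u}} : Finset (Finset V))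
        then 1 else 2)
  euler : (Fintype.card V : ℤ) - (graph.edgeSet.ncard : ℤ) + ((faces.card : ℤ) + 1) = 2

/-- A parented a-graph `G_xy` is an a-graph counterexample if in every proper
4-coloring the designated opposite boundary vertices `x` and `y` get the same color. -/
def IsACounterexample {V : Type} [Fintype V] [DecidableEq V] (G : AGraph V) : Prop :=
  ∀ c : V → Fin 4, IsProper4Coloring G.graph c → c G.x = c G.y

/-- A minimal a-graph counterexample: an a-graph counterexample such that no a-graph
counterexample has fewer vertices. -/
def IsMinimalACounterexample {V : Type} [Fintype V] [DecidableEq V] (G : AGraph V) : Prop :=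
  IsACounterexample G ∧
    ∀ (W : Type) [Fintype W] [DecidableEq W] (H : AGraph W),
      IsACounterexample H → Fintype.card V ≤ Fintype.card W

/-- A minimal counterexample to the 4-color conjecture: a planar triangulation with no
proper 4-coloring such that every planar triangulation of lower order has one. -/
def IsMinimal4CTCounterexample {V : Type} [Fintype V] [DecidableEq V]
    (T : PlanarTriangulation V) : Prop :=
  (¬ ∃ c : V → Fin 4, IsProper4Coloring T.graph c) ∧
    ∀ (W : Type) [Fintype W] [DecidableEq W] (S : PlanarTriangulation W),
      Fintype.card W < Fintype.card V → ∃ c : W → Fin 4, IsProper4Coloring S.graph c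

/-- `b` can be reached from `a` by a walk of `G` all of whose vertices lie in `S`. -/
def ReachableWithin {V : Type} (G : SimpleGraph V) (S : Set V) (a b : V) : Prop :=
  ∃ p : G.Walk a b, ∀ w ∈ p.support, w ∈ S

/-- Removing the vertex set `S` from `G` leaves a disconnected graph. -/
def RemovalDisconnects {V : Type} (G : SimpleGraph V) (S : Set V) : Prop :=
  ∃ a b : V, a ∉ S ∧ b ∉ S ∧ ¬ ReachableWithin G Sᶜ a b

/-- `G` has a separating cycle of length `n`. -/
def HasSeparatingCycle {V : Type} (G : SimpleGraph V) (n : ℕ) : Prop :=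
  ∃ (a : V) (p : G.Walk a a), p.IsCycle ∧ p.length = n ∧
    RemovalDisconnects G {w | w ∈ p.support}

/-- A planar triangulation is internally 6-connected if it has minimum degree 5, no
separating 3-cycles or 4-cycles, and whenever a separating 5-cycle is removed, at least
one of the resulting components consists of a single vertex. -/
def Internally6Connected {V : Type} [Fintype V] [DecidableEq V]
    (T : PlanarTriangulation V) : Prop :=
  (∀ w : V, 5 ≤ vdeg T.graph w) ∧
  ¬ HasSeparatingCycle T.graph 3 ∧
  ¬ HasSeparatingCycle T.graph 4 ∧
  ∀ (a : V) (p : T.graph.Walk a a), p.IsCycle → p.length = 5 →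
    RemovalDisconnects T.graph {w | w ∈ p.support} →
    ∃ z : V, z ∉ p.support ∧
      ∀ b : V, b ∉ p.support → ReachableWithin T.graph {w | w ∉ p.support} z b → b = z

/-- The graph of the parent triangulation `G + xy` of an a-graph `G`. -/
def parentXYGraph {V : Type} [Fintype V] [DecidableEq V] (G : AGraph V) : SimpleGraph V :=
  G.graph ⊔ SimpleGraph.fromEdgeSet {s(G.x, G.y)}

/-- The graph of the parent triangulation `G + uv` of an a-graph `G`. -/
def parentUVGraph {V : Type} [Fintype V] [DecidableEq V] (G : AGraph V) : SimpleGraph V :=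
  G.graph ⊔ SimpleGraph.fromEdgeSet {s(G.u, G.v)}

/-- An a-graph is internally 6a-connected if at least one of its two parent
triangulations is internally 6-connected. -/
def Internally6aConnected {V : Type} [Fintype V] [DecidableEq V] (G : AGraph V) : Prop :=
  ∃ T : PlanarTriangulation V,
    (T.graph = parentXYGraph G ∨ T.graph = parentUVGraph G) ∧ Internally6Connected T

/-- A single Kempe exchange: for some pair of distinct colors `j`, `k`, the colors `j`
and `k` are swapped on a non-empty proper subset of the `j`-`k` Kempe chains (a
non-empty union `U` of connected components of the subgraph induced by the vertices
colored `j` or `k`, with `U` not all of them), all other vertices keeping their color. -/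
def KempeStep {V : Type} (G : SimpleGraph V) (c c' : V → Fin 4) : Prop :=
  ∃ j k : Fin 4, j ≠ k ∧ ∃ U : Set V,
    U.Nonempty ∧
    U ⊆ {w | c w = j ∨ c w = k} ∧
    U ≠ {w | c w = j ∨ c w = k} ∧
    (∀ a ∈ U, ∀ b : V, ReachableWithin G {w | c w = j ∨ c w = k} a b → b ∈ U) ∧
    (∀ w ∈ U, c' w = if c w = j then k else j) ∧
    (∀ w : V, w ∉ U → c' w = c w)

/-- The equivalence relation on colorings generated by Kempe exchanges. -/
def KempeEquiv {V : Type} (G : SimpleGraph V) : (V → Fin 4) → (V → Fin 4) → Prop :=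
  Relation.EqvGen (KempeStep G)

/-- For designated vertices `x`, `y`: no Kempe equivalence class of proper 4-colorings
contains both a non-solution state (`c x = c y`) and a solution state (`c x ≠ c y`).
This is the defining property of the family `A*`. -/
def NoNSClass {V : Type} (G : SimpleGraph V) (x y : V) : Prop :=
  ∀ c c' : V → Fin 4, IsProper4Coloring G c → IsProper4Coloring G c' →
    KempeEquiv G c c' → (c x = c y ↔ c' x = c' y)

/-- The coloring state determined by a coloring: the induced partition of the vertex
set into color classes, recorded as the relation of having equal colors.  Two colorings
represent the same state precisely when they have the same `statePart`. -/
def statePart {V : Type} (c : V → Fin 4) : V → V → Prop :=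
  fun a b => c a = c b

/-- The four boundary vertices of an a-graph. -/
def boundaryFinset {V : Type} [Fintype V] [DecidableEq V] (G : AGraph V) : Finset V :=
  {G.u, G.x, G.v, G.y}

/-- The interior vertices of an a-graph: those not on the boundary 4-cycle. -/
def interiorFinset {V : Type} [Fintype V] [DecidableEq V] (G : AGraph V) : Finset V :=
  Finset.univ \ boundaryFinset G

open Classical in
/-- The inner ring of an a-graph: the interior vertices adjacent to some boundary
vertex. -/
noncomputable def innerRingFinset {V : Type} [Fintype V] [DecidableEq V]
    (G : AGraph V) : Finset V :=
  (interiorFinset G).filter fun w => ∃ b ∈ boundaryFinset G, G.graph.Adj w b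

/-- `G` belongs to the family `G(m,n)`: its inner ring has order `n` and encloses `m`
further interior vertices. -/
def InFamilyG {V : Type} [Fintype V] [DecidableEq V] (G : AGraph V) (m n : ℕ) : Prop :=
  (innerRingFinset G).card = n ∧ (interiorFinset G \ innerRingFinset G).card = m

/-- The icosahedron, the unique 5-regular planar triangulation, on 12 vertices. -/
def icosG : SimpleGraph (Fin 12) :=
  SimpleGraph.fromEdgeSet
    {s(0, 1), s(0, 2), s(0, 3), s(0, 4), s(0, 5),
     s(1, 2), s(2, 3), s(3, 4), s(4, 5), s(5, 1),
     s(11, 6), s(11, 7), s(11, 8), s(11, 9), s(11, 10),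
     s(6, 7), s(7, 8), s(8, 9), s(9, 10), s(10, 6),
     s(1, 6), s(1, 10), s(2, 6), s(2, 7), s(3, 7),
     s(3, 8), s(4, 8), s(4, 9), s(5, 9), s(5, 10)}

/-- The order-12 a-graph `G*`: the icosahedron with the edge `uv = {0,1}` deleted.
Its boundary 4-cycle is `u x v y = 0 2 1 5`, so `(x, y) = (2, 5)` and
`(u, v) = (0, 1)` are the two pairs of opposite boundary vertices. -/
def gstarG : SimpleGraph (Fin 12) := icosG.deleteEdges {s(0, 1)}

/-- The boundary vertex `u` of `G*`. -/
def gstarU : Fin 12 := 0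
/-- The boundary vertex `v` of `G*`. -/
def gstarV : Fin 12 := 1
/-- The boundary vertex `x` of `G*`. -/
def gstarX : Fin 12 := 2
/-- The boundary vertex `y` of `G*`. -/
def gstarY : Fin 12 := 5

/-!
In every proper 4-coloring of `G*` the boundary vertices `x` and `y` lie on a common `j`-`k` chain
whenever both are colored from `{j, k}`, so no Kempe exchange changes whether `c x = c y`. This
invariant separates two classes.

It is a complete invariant. If `c u ≠ c v`, then `c` also colors the icosahedron, and deleting
`uv` leaves `u` and `v` on different `c u`-`c v` chains; exchanging the chain of `u` gives
`c u = c v`. The states with `c u = c v` are six with `c x ≠ c y` and two with `c x = c y`, each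
group linked by single exchanges. Finally, exchanging one of several `j`-`k` chains and then all
the others transposes `j` and `k`; one state in each group admits this for the three color pairs
containing a fixed color, and these transpositions generate all color permutations.
-/

open Equiv

section ReachableWithin

variable {V : Type} {G : SimpleGraph V} {S U : Set V} {a b : V}

/-- `U` is closed under passing to neighbours inside `S`. When `U ⊆ S` this says that `U` is a
union of connected components of the subgraph induced by `S`. -/
def IsClosedWithin (G : SimpleGraph V) (S U : Set V) : Prop :=
  ∀ ⦃a b⦄, a ∈ U → G.Adj a b → b ∈ S → b ∈ U

theorem IsClosedWithin.mem_of_reachableWithin (hU : IsClosedWithin G S U) (ha : a ∈ U)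
    (hab : ReachableWithin G S a b) : b ∈ U := by
  obtain ⟨p, hp⟩ := hab
  induction p with
  | nil => exact ha
  | cons hadj p ih =>
    simp only [Walk.support_cons, List.forall_mem_cons] at hp
    exact ih (hU ha hadj (hp.2 _ p.start_mem_support)) hp.2

theorem isClosedWithin_iff (hUS : U ⊆ S) :
    IsClosedWithin G S U ↔ ∀ a ∈ U, ∀ b, ReachableWithin G S a b → b ∈ U := by
  refine ⟨fun hU a ha b ↦ hU.mem_of_reachableWithin ha, fun hU a b ha hab hb ↦ hU a ha b ?_⟩
  exact ⟨hab.toWalk, by simp [hUS ha, hb]⟩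

theorem IsClosedWithin.sdiff (hU : IsClosedWithin G S U) : IsClosedWithin G S (S \ U) :=
  fun _ _ ha hab hb ↦ ⟨hb, fun hbU ↦ ha.2 (hU hbU hab.symm ha.1)⟩

theorem isClosedWithin_setOf_reachableWithin (a : V) :
    IsClosedWithin G S {b | ReachableWithin G S a b} := by
  rintro b d ⟨p, hp⟩ hbd hd
  refine ⟨p.concat hbd, fun w hw ↦ ?_⟩
  rw [Walk.support_concat, List.mem_append, List.mem_singleton] at hw
  exact hw.elim (hp w) (· ▸ hd)

theorem ReachableWithin.refl (ha : a ∈ S) : ReachableWithin G S a a :=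
  ⟨.nil, by simpa using ha⟩

theorem ReachableWithin.symm (hab : ReachableWithin G S a b) : ReachableWithin G S b a :=
  let ⟨p, hp⟩ := hab
  ⟨p.reverse, by simpa using hp⟩

theorem ReachableWithin.trans {d : V} (hab : ReachableWithin G S a b)
    (hbd : ReachableWithin G S b d) : ReachableWithin G S a d := by
  obtain ⟨p, hp⟩ := hab
  obtain ⟨q, hq⟩ := hbd
  exact ⟨p.append q, fun w hw ↦ ((p.mem_support_append_iff q).1 hw).elim (hp w) (hq w)⟩

theorem ReachableWithin.mem_right (hab : ReachableWithin G S a b) : b ∈ S :=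
  let ⟨p, hp⟩ := hab
  hp b p.end_mem_support

end ReachableWithin

section Decidability

variable {V : Type} [Fintype V] [DecidableEq V] (G : SimpleGraph V) [DecidableRel G.Adj]
  (S : Set V) [DecidablePred (· ∈ S)]

/-- The vertices from which `b` can be reached in at most `n` steps inside `S`, computed by
breadth-first search. -/
def ballWithin (b : V) : ℕ → Finset V
  | 0 => if b ∈ S then {b} else ∅
  | n + 1 => {a | a ∈ ballWithin b n ∨ a ∈ S ∧ ∃ d ∈ ballWithin b n, G.Adj a d}

theorem mem_ballWithin {a b : V} {n : ℕ} :
    a ∈ ballWithin G S b n ↔ ∃ p : G.Walk a b, p.length ≤ n ∧ ∀ w ∈ p.support, w ∈ S := by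
  induction n generalizing a with
  | zero =>
    rw [ballWithin]
    constructor
    · intro ha
      split_ifs at ha with hb
      · obtain rfl := Finset.mem_singleton.1 ha
        exact ⟨.nil, by simpa using hb⟩
      · exact absurd ha (Finset.notMem_empty a)
    · rintro ⟨p, hlen, hp⟩
      obtain rfl := Walk.eq_of_length_eq_zero (Nat.le_zero.1 hlen)
      simp [hp a p.start_mem_support]
  | succ n ih =>
    simp only [ballWithin, Finset.mem_filter_univ, ih]
    constructor
    · rintro (⟨p, hlen, hp⟩ | ⟨ha, d, ⟨p, hlen, hp⟩, had⟩)
      · exact ⟨p, hlen.trans n.le_succ, hp⟩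
      · exact ⟨p.cons had, by simpa using hlen, by simpa using ⟨ha, hp⟩⟩
    · rintro ⟨p, hlen, hp⟩
      cases p with
      | nil => exact .inl ⟨.nil, n.zero_le, hp⟩
      | cons had p =>
        simp only [Walk.support_cons, List.forall_mem_cons] at hp
        exact .inr ⟨hp.1, _, ⟨p, Nat.succ_le_succ_iff.1 hlen, hp.2⟩, had⟩

theorem reachableWithin_iff_mem_ballWithin {a b : V} :
    ReachableWithin G S a b ↔ a ∈ ballWithin G S b (Fintype.card V) := by
  rw [mem_ballWithin]
  constructor
  · rintro ⟨p, hp⟩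
    exact ⟨p.bypass, p.bypass_isPath.length_lt.le,
      fun w hw ↦ hp w (p.support_bypass_subset_support hw)⟩
  · rintro ⟨p, -, hp⟩
    exact ⟨p, hp⟩

instance (a b : V) : Decidable (ReachableWithin G S a b) :=
  decidable_of_iff _ (reachableWithin_iff_mem_ballWithin G S).symm

end Decidability


theorem inv_comp_comp {α β : Type*} (σ : Perm β) (f : α → β) : ⇑σ⁻¹ ∘ ⇑σ ∘ f = f :=
  (symm_comp_eq σ _ _).2 rfl

section Kempe

variable {V : Type} {G : SimpleGraph V} {c c' : V → Fin 4} {j k : Fin 4} {U : Set V} {x y : V}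

theorem IsProper4Coloring.perm_comp (hc : IsProper4Coloring G c) (σ : Perm (Fin 4)) :
    IsProper4Coloring G (σ ∘ c) :=
  fun a b hab ↦ σ.injective.ne (hc a b hab)

/-- The vertices colored `j` or `k`; the connected components of the subgraph they induce are
the `j`-`k` Kempe chains. -/
def bichromatic (c : V → Fin 4) (j k : Fin 4) : Set V := {w | c w = j ∨ c w = k}

instance (c : V → Fin 4) (j k : Fin 4) : DecidablePred (· ∈ bichromatic c j k) :=
  fun w ↦ inferInstanceAs (Decidable (c w = j ∨ c w = k))

theorem swap_apply_eq_self_of_notMem_bichromatic (hx : x ∉ bichromatic c j k) :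
    swap j k (c x) = c x :=
  swap_apply_of_ne_of_ne (fun h ↦ hx (.inl h)) fun h ↦ hx (.inr h)

theorem bichromatic_swap_comp : bichromatic (swap j k ∘ c) j k = bichromatic c j k := by
  ext w
  simp [bichromatic, swap_apply_eq_iff, or_comm]

theorem bichromatic_perm_comp (σ : Perm (Fin 4)) :
    bichromatic (σ ∘ c) (σ j) (σ k) = bichromatic c j k := by
  ext w
  simp [bichromatic]

/-- The coloring `c'` arises from `c` by swapping the colors `j` and `k` on the non-empty proper
union `U` of `j`-`k` Kempe chains. -/
structure IsKempeExchange (G : SimpleGraph V) (c c' : V → Fin 4) (j k : Fin 4) (U : Set V) :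
    Prop where
  ne : j ≠ k
  nonempty : U.Nonempty
  ssubset : U ⊂ bichromatic c j k
  isClosedWithin : IsClosedWithin G (bichromatic c j k) U
  eqOn : Set.EqOn c' (swap j k ∘ c) U
  eqOn_compl : Set.EqOn c' c Uᶜ

theorem kempeStep_iff : KempeStep G c c' ↔ ∃ j k U, IsKempeExchange G c c' j k U := by
  have swap_eq {w j k} (hw : w ∈ bichromatic c j k) :
      swap j k (c w) = if c w = j then k else j := by
    rcases hw with rfl | rfl <;> simp +contextual
  constructor
  · rintro ⟨j, k, hjk, U, hne, hsub, hproper, hclosed, hU, hUc⟩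
    exact ⟨j, k, U, hjk, hne, hsub.ssubset_of_ne hproper, (isClosedWithin_iff hsub).2 hclosed,
      fun w hw ↦ (hU w hw).trans (swap_eq (hsub hw)).symm, hUc⟩
  · rintro ⟨j, k, U, h⟩
    exact ⟨j, k, h.ne, U, h.nonempty, h.ssubset.subset, h.ssubset.ne,
      (isClosedWithin_iff h.ssubset.subset).1 h.isClosedWithin,
      fun w hw ↦ (h.eqOn hw).trans (swap_eq (h.ssubset.subset hw)), h.eqOn_compl⟩

namespace IsKempeExchange

theorem kempeEquiv (h : IsKempeExchange G c c' j k U) : KempeEquiv G c c' :=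
  .rel _ _ (kempeStep_iff.2 ⟨j, k, U, h⟩)

theorem perm_comp (h : IsKempeExchange G c c' j k U) (σ : Perm (Fin 4)) :
    IsKempeExchange G (σ ∘ c) (σ ∘ c') (σ j) (σ k) U where
  ne := σ.injective.ne h.ne
  nonempty := h.nonempty
  ssubset := by rw [bichromatic_perm_comp]; exact h.ssubset
  isClosedWithin := by rw [bichromatic_perm_comp]; exact h.isClosedWithin
  eqOn w hw := by simp [h.eqOn hw, swap_apply_apply]
  eqOn_compl w hw := congrArg σ (h.eqOn_compl hw)

theorem apply_ne_of_mem_of_notMem (h : IsKempeExchange G c c' j k U) (hx : x ∈ U)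
    (hy : y ∉ bichromatic c j k) : c x ≠ c y ∧ c' x ≠ c' y := by
  have hyU : y ∉ U := fun hyU ↦ hy (h.ssubset.subset hyU)
  have hxS : x ∈ bichromatic c j k := h.ssubset.subset hx
  rw [h.eqOn hx, h.eqOn_compl hyU]
  refine ⟨fun hxy ↦ hy ?_, fun hxy ↦ hy ?_⟩
  · simpa [bichromatic, hxy] using hxS
  · rw [← bichromatic_swap_comp] at hxS
    simpa [bichromatic, ← hxy] using hxS

theorem apply_eq_iff (h : IsKempeExchange G c c' j k U)
    (hxy : x ∈ U → y ∈ bichromatic c j k → y ∈ U)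
    (hyx : y ∈ U → x ∈ bichromatic c j k → x ∈ U) : c x = c y ↔ c' x = c' y := by
  by_cases hx : x ∈ U <;> by_cases hy : y ∈ U
  · rw [h.eqOn hx, h.eqOn hy, Function.comp_apply, Function.comp_apply, (swap j k).apply_eq_iff_eq]
  · have hne := h.apply_ne_of_mem_of_notMem hx fun hyS ↦ hy (hxy hx hyS)
    exact iff_of_false hne.1 hne.2
  · have hne := h.apply_ne_of_mem_of_notMem hy fun hxS ↦ hx (hyx hy hxS)
    exact iff_of_false hne.1.symm hne.2.symm
  · rw [h.eqOn_compl hx, h.eqOn_compl hy]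

theorem isProper4Coloring_iff (h : IsKempeExchange G c c' j k U) :
    IsProper4Coloring G c ↔ IsProper4Coloring G c' :=
  forall₃_congr fun _ _ hab ↦ not_congr <| h.apply_eq_iff
    (fun ha ↦ h.isClosedWithin ha hab) fun hb ↦ h.isClosedWithin hb hab.symm

theorem bichromatic_eq (h : IsKempeExchange G c c' j k U) :
    bichromatic c' j k = bichromatic c j k := by
  ext w
  by_cases hw : w ∈ U
  · nth_rw 2 [← bichromatic_swap_comp]
    simp only [bichromatic, Set.mem_ofPred_eq, h.eqOn hw]
  · simp only [bichromatic, Set.mem_ofPred_eq, h.eqOn_compl hw]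

theorem sdiff (h : IsKempeExchange G c c' j k U) :
    IsKempeExchange G c' (swap j k ∘ c) j k (bichromatic c j k \ U) where
  ne := h.ne
  nonempty := Set.nonempty_of_ssubset h.ssubset
  ssubset := by
    rw [h.bichromatic_eq]
    obtain ⟨w, hw⟩ := h.nonempty
    exact Set.ssubset_iff_exists.2
      ⟨Set.sdiff_subset, w, h.ssubset.subset hw, fun hw' ↦ hw'.2 hw⟩
  isClosedWithin := by
    rw [h.bichromatic_eq]
    exact h.isClosedWithin.sdiff
  eqOn w hw := congrArg (swap j k) (h.eqOn_compl hw.2).symm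
  eqOn_compl w hw := by
    by_cases hwU : w ∈ U
    · exact (h.eqOn hwU).symm
    · rw [h.eqOn_compl hwU]
      exact swap_apply_eq_self_of_notMem_bichromatic fun hwS ↦ hw ⟨hwS, hwU⟩

end IsKempeExchange

/-- The vertices `x` and `y` lie on a common Kempe chain for every pair of colors that contains
both of their colors. -/
def KempeLinked (G : SimpleGraph V) (c : V → Fin 4) (x y : V) : Prop :=
  ∀ j k, j ≠ k → x ∈ bichromatic c j k → y ∈ bichromatic c j k →
    ReachableWithin G (bichromatic c j k) x y

theorem KempeLinked.perm_comp (h : KempeLinked G c x y) (σ : Perm (Fin 4)) :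
    KempeLinked G (σ ∘ c) x y := by
  intro j k hjk hx hy
  obtain ⟨j, rfl⟩ := σ.surjective j
  obtain ⟨k, rfl⟩ := σ.surjective k
  rw [bichromatic_perm_comp] at hx hy ⊢
  exact h j k (ne_of_apply_ne σ hjk) hx hy

theorem KempeLinked.apply_eq_iff (hxy : KempeLinked G c x y)
    (h : IsKempeExchange G c c' j k U) : c x = c y ↔ c' x = c' y :=
  h.apply_eq_iff
    (fun hx hy ↦ h.isClosedWithin.mem_of_reachableWithin hx
      (hxy j k h.ne (h.ssubset.subset hx) hy))
    fun hy hx ↦ h.isClosedWithin.mem_of_reachableWithin hy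
      (hxy j k h.ne hx (h.ssubset.subset hy)).symm

namespace KempeEquiv

theorem refl (c : V → Fin 4) : KempeEquiv G c c := Relation.EqvGen.refl c

theorem symm (h : KempeEquiv G c c') : KempeEquiv G c' c := Relation.EqvGen.symm _ _ h

theorem trans {c'' : V → Fin 4} (h : KempeEquiv G c c') (h' : KempeEquiv G c' c'') :
    KempeEquiv G c c'' :=
  Relation.EqvGen.trans _ _ _ h h'

theorem perm_comp (h : KempeEquiv G c c') (σ : Perm (Fin 4)) :
    KempeEquiv G (σ ∘ c) (σ ∘ c') := by
  induction h with
  | rel c c' h =>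
    obtain ⟨j, k, U, h⟩ := kempeStep_iff.1 h
    exact (h.perm_comp σ).kempeEquiv
  | refl c => exact refl _
  | symm c c' _ ih => exact ih.symm
  | trans c c' c'' _ _ ih ih' => exact ih.trans ih'

theorem isProper4Coloring_iff (h : KempeEquiv G c c') :
    IsProper4Coloring G c ↔ IsProper4Coloring G c' := by
  induction h with
  | rel c c' h =>
    obtain ⟨j, k, U, h⟩ := kempeStep_iff.1 h
    exact h.isProper4Coloring_iff
  | refl c => exact Iff.rfl
  | symm c c' _ ih => exact ih.symm
  | trans c c' c'' _ _ ih ih' => exact ih.trans ih'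

theorem apply_eq_iff (hlinked : ∀ c, IsProper4Coloring G c → KempeLinked G c x y)
    (h : KempeEquiv G c c') (hc : IsProper4Coloring G c) : c x = c y ↔ c' x = c' y := by
  induction h with
  | rel c c' h =>
    obtain ⟨j, k, U, h⟩ := kempeStep_iff.1 h
    exact (hlinked c hc).apply_eq_iff h
  | refl c => exact Iff.rfl
  | symm c c' h ih => exact (ih ((isProper4Coloring_iff h).2 hc)).symm
  | trans c c' c'' h _ ih ih' => exact (ih hc).trans (ih' ((isProper4Coloring_iff h).1 hc))

end KempeEquiv

/-- The coloring obtained from `c` by swapping `j` and `k` on the `j`-`k` Kempe chain of `s`. -/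
def chainExchange (G : SimpleGraph V) (c : V → Fin 4) (j k : Fin 4) (s : V)
    [DecidablePred (ReachableWithin G (bichromatic c j k) s)] (w : V) : Fin 4 :=
  if ReachableWithin G (bichromatic c j k) s w then swap j k (c w) else c w

theorem isKempeExchange_chainExchange [DecidablePred (ReachableWithin G (bichromatic c j k) x)]
    (hjk : j ≠ k) (hx : x ∈ bichromatic c j k) (hy : y ∈ bichromatic c j k)
    (hxy : ¬ ReachableWithin G (bichromatic c j k) x y) :
    IsKempeExchange G c (chainExchange G c j k x) j k
      {w | ReachableWithin G (bichromatic c j k) x w} where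
  ne := hjk
  nonempty := ⟨x, .refl hx⟩
  ssubset := Set.ssubset_iff_exists.2 ⟨fun _ hw ↦ hw.mem_right, y, hy, hxy⟩
  isClosedWithin := isClosedWithin_setOf_reachableWithin x
  eqOn _ hw := if_pos hw
  eqOn_compl _ hw := if_neg hw

theorem exists_kempeEquiv_apply_eq_of_not_reachableWithin (hxy : c x ≠ c y)
    (h : ¬ ReachableWithin G (bichromatic c (c x) (c y)) x y) :
    ∃ c', KempeEquiv G c c' ∧ c' x = c' y := by
  classical
  have hx : x ∈ bichromatic c (c x) (c y) := .inl rfl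
  have hexch := isKempeExchange_chainExchange hxy hx (.inr rfl) h
  refine ⟨_, hexch.kempeEquiv, ?_⟩
  rw [hexch.eqOn (.refl hx), hexch.eqOn_compl h, Function.comp_apply, swap_apply_left]

/-- There are at least two `j`-`k` Kempe chains. -/
def HasTwoChains (G : SimpleGraph V) (c : V → Fin 4) (j k : Fin 4) : Prop :=
  ∃ s ∈ bichromatic c j k, ∃ t ∈ bichromatic c j k, ¬ ReachableWithin G (bichromatic c j k) s t

theorem kempeEquiv_swap_comp (hjk : j ≠ k) (h : HasTwoChains G c j k) :
    KempeEquiv G c (swap j k ∘ c) := by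
  classical
  obtain ⟨s, hs, t, ht, hst⟩ := h
  have hchain := isKempeExchange_chainExchange hjk hs ht hst
  exact hchain.kempeEquiv.trans hchain.sdiff.kempeEquiv

theorem kempeEquiv_chainExchange (hjk : j ≠ k) (h : HasTwoChains G c j k) (s : V)
    [DecidablePred (ReachableWithin G (bichromatic c j k) s)] :
    KempeEquiv G c (chainExchange G c j k s) := by
  by_cases hs : s ∈ bichromatic c j k
  · obtain ⟨a, ha, b, hb, hab⟩ := h
    by_cases hsa : ReachableWithin G (bichromatic c j k) s a
    · exact (isKempeExchange_chainExchange hjk hs hb fun hsb ↦ hab (hsa.symm.trans hsb)).kempeEquiv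
    · exact (isKempeExchange_chainExchange hjk hs ha hsa).kempeEquiv
  · have hfix : chainExchange G c j k s = c :=
      funext fun w ↦ if_neg fun hsw ↦ hs hsw.symm.mem_right
    rw [hfix]
    exact .refl c

/-- The color permutations that lead from `c` to a Kempe equivalent coloring. -/
def kempeStabilizer (G : SimpleGraph V) (c : V → Fin 4) : Subgroup (Perm (Fin 4)) where
  carrier := {σ | KempeEquiv G c (σ ∘ c)}
  one_mem' := .refl c
  mul_mem' {σ _} hσ hτ := hσ.trans (hτ.perm_comp σ)
  inv_mem' {σ} hσ := by
    have hinv := (hσ.perm_comp σ⁻¹).symm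
    rwa [inv_comp_comp] at hinv

theorem eq_top_of_forall_swap_mem {α : Type*} [Finite α] [DecidableEq α] {H : Subgroup (Perm α)}
    (i : α) (hH : ∀ a ≠ i, swap i a ∈ H) : H = ⊤ := by
  rw [eq_top_iff, ← Perm.closure_isSwap, Subgroup.closure_le]
  rintro _ ⟨a, b, hab, rfl⟩
  rcases eq_or_ne a i with rfl | ha
  · exact hH b hab.symm
  rcases eq_or_ne b i with rfl | hb
  · exact swap_comm a b ▸ hH a ha
  · rw [← swap_mul_swap_mul_swap hb hab.symm, swap_comm b i]
    exact mul_mem (mul_mem (hH a ha) (hH b hb)) (hH a ha)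

theorem kempeEquiv_perm_comp (j : Fin 4) (h : ∀ k ≠ j, HasTwoChains G c j k)
    (σ : Perm (Fin 4)) : KempeEquiv G c (σ ∘ c) := by
  have htop : kempeStabilizer G c = ⊤ :=
    eq_top_of_forall_swap_mem j fun k hk ↦ kempeEquiv_swap_comp hk.symm (h k hk)
  have hσ : σ ∈ kempeStabilizer G c := htop ▸ Subgroup.mem_top σ
  exact hσ

section Decidable

variable [Fintype V] [DecidableEq V] (G) [DecidableRel G.Adj] (c)

instance : Decidable (IsProper4Coloring G c) :=
  inferInstanceAs (Decidable (∀ a b, G.Adj a b → c a ≠ c b))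

instance (x y : V) : Decidable (KempeLinked G c x y) :=
  inferInstanceAs (Decidable (∀ j k, j ≠ k → x ∈ bichromatic c j k → y ∈ bichromatic c j k →
    ReachableWithin G (bichromatic c j k) x y))

instance (j k : Fin 4) : Decidable (HasTwoChains G c j k) :=
  inferInstanceAs (Decidable (∃ s ∈ bichromatic c j k, ∃ t ∈ bichromatic c j k,
    ¬ ReachableWithin G (bichromatic c j k) s t))

end Decidable

end Kempe

section GStar

set_option synthInstance.maxSize 1024

instance : DecidableRel gstarG.Adj := fun a b ↦
  decidable_of_iff (b ∈ (![{2, 3, 4, 5}, {2, 5, 6, 10}, {0, 1, 3, 6, 7}, {0, 2, 4, 7, 8},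
    {0, 3, 5, 8, 9}, {0, 1, 4, 9, 10}, {1, 2, 7, 10, 11}, {2, 3, 6, 8, 11}, {3, 4, 7, 9, 11},
    {4, 5, 8, 10, 11}, {1, 5, 6, 9, 11}, {6, 7, 8, 9, 10}] : Fin 12 → Finset (Fin 12)) a) <| by
    simp only [gstarG, icosG, deleteEdges_adj, fromEdgeSet_adj, Set.mem_insert_iff,
      Set.mem_singleton_iff]
    revert a b
    decide +kernel

variable {c c' : Fin 12 → Fin 4}

/-- The triangle `0 2 3` has the colors `0 1 2`. Each coloring state has exactly one such
representative. -/
def IsNormalized (c : Fin 12 → Fin 4) : Prop := c 0 = 0 ∧ c 2 = 1 ∧ c 3 = 2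

theorem exists_perm_apply_eq : ∀ a b d : Fin 4, a ≠ b → a ≠ d → b ≠ d →
    ∃ σ : Perm (Fin 4), σ a = 0 ∧ σ b = 1 ∧ σ d = 2 := by
  decide +kernel

theorem exists_isNormalized_perm_comp (hc : IsProper4Coloring gstarG c) :
    ∃ σ : Perm (Fin 4), IsNormalized (σ ∘ c) :=
  exists_perm_apply_eq _ _ _ (hc 0 2 (by decide)) (hc 0 3 (by decide)) (hc 2 3 (by decide))

-- The vertices are colored in an order in which each has many already colored neighbours, so that
-- deciding the nested quantifiers in `hP` amounts to a backtracking search with few branches.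
theorem IsNormalized.of_forall_extension (hnorm : IsNormalized c) {P : (Fin 12 → Fin 4) → Prop}
    (hP : ∀ c₄, c₄ ≠ 0 ∧ c₄ ≠ 2 → ∀ c₅, c₅ ≠ 0 ∧ c₅ ≠ c₄ → ∀ c₁, c₁ ≠ 1 ∧ c₁ ≠ c₅ →
      ∀ c₇, c₇ ≠ 1 ∧ c₇ ≠ 2 → ∀ c₆, c₆ ≠ c₁ ∧ c₆ ≠ 1 ∧ c₆ ≠ c₇ →
      ∀ c₈, c₈ ≠ 2 ∧ c₈ ≠ c₄ ∧ c₈ ≠ c₇ → ∀ c₉, c₉ ≠ c₄ ∧ c₉ ≠ c₅ ∧ c₉ ≠ c₈ →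
      ∀ c₁₀, c₁₀ ≠ c₁ ∧ c₁₀ ≠ c₅ ∧ c₁₀ ≠ c₆ ∧ c₁₀ ≠ c₉ →
      ∀ c₁₁, c₁₁ ≠ c₆ ∧ c₁₁ ≠ c₇ ∧ c₁₁ ≠ c₈ ∧ c₁₁ ≠ c₉ ∧ c₁₁ ≠ c₁₀ →
        P ![0, c₁, 1, 2, c₄, c₅, c₆, c₇, c₈, c₉, c₁₀, c₁₁])
    (hc : IsProper4Coloring gstarG c) : P c := by
  obtain ⟨h0, h2, h3⟩ := hnorm
  have hc_eq : c = ![0, c 1, 1, 2, c 4, c 5, c 6, c 7, c 8, c 9, c 10, c 11] := by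
    funext i
    fin_cases i <;> first | assumption | rfl
  rw [hc_eq]
  apply hP <;> (repeat' apply And.intro) <;> first
    | exact hc _ _ (by decide)
    | exact h0 ▸ hc _ 0 (by decide)
    | exact h2 ▸ hc _ 2 (by decide)
    | exact h3 ▸ hc _ 3 (by decide)

/-- The states of `G*` with `c u = c v` and `c x ≠ c y`, normalized and ordered so that a
single Kempe exchange leads from each to the next. -/
def ringColoring : Fin 6 → Fin 12 → Fin 4 :=
  ![![0, 0, 1, 2, 1, 2, 2, 0, 3, 0, 3, 1], ![0, 0, 1, 2, 1, 3, 3, 0, 3, 0, 2, 1],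
    ![0, 0, 1, 2, 1, 3, 3, 0, 3, 0, 1, 2], ![0, 0, 1, 2, 1, 2, 3, 0, 3, 0, 1, 2],
    ![0, 0, 1, 2, 3, 2, 3, 0, 1, 0, 1, 2], ![0, 0, 1, 2, 3, 2, 2, 0, 1, 0, 1, 3]]

/-- The states of `G*` with `c u = c v` and `c x = c y`, normalized. -/
def pairColoring : Fin 2 → Fin 12 → Fin 4 :=
  ![![0, 0, 1, 2, 3, 1, 2, 3, 0, 2, 3, 1], ![0, 0, 1, 2, 3, 1, 2, 3, 1, 2, 3, 0]]

theorem IsNormalized.kempeLinked (hnorm : IsNormalized c) (hc : IsProper4Coloring gstarG c) :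
    KempeLinked gstarG c gstarX gstarY :=
  hnorm.of_forall_extension (P := fun c ↦ KempeLinked gstarG c gstarX gstarY)
    (by decide +kernel) hc

theorem IsNormalized.not_reachableWithin (hnorm : IsNormalized c)
    (hc : IsProper4Coloring gstarG c) (huv : c gstarU ≠ c gstarV) :
    ¬ ReachableWithin gstarG (bichromatic c (c gstarU) (c gstarV)) gstarU gstarV :=
  hnorm.of_forall_extension (P := fun c ↦ c gstarU ≠ c gstarV →
    ¬ ReachableWithin gstarG (bichromatic c (c gstarU) (c gstarV)) gstarU gstarV)
    (by decide +kernel) hc huv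

theorem IsNormalized.eq_ringColoring_or_eq_pairColoring (hnorm : IsNormalized c)
    (hc : IsProper4Coloring gstarG c) (huv : c gstarU = c gstarV) :
    (∃ i, c = ringColoring i) ∨ ∃ i, c = pairColoring i :=
  hnorm.of_forall_extension (P := fun c ↦ c gstarU = c gstarV →
    (∃ i, c = ringColoring i) ∨ ∃ i, c = pairColoring i)
    (by decide +kernel) hc huv

theorem kempeLinked_gstarX_gstarY (c : Fin 12 → Fin 4) (hc : IsProper4Coloring gstarG c) :
    KempeLinked gstarG c gstarX gstarY := by
  obtain ⟨σ, hσ⟩ := exists_isNormalized_perm_comp hc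
  have hlinked := (hσ.kempeLinked (hc.perm_comp σ)).perm_comp σ⁻¹
  rwa [inv_comp_comp] at hlinked

theorem not_reachableWithin_gstarU_gstarV (hc : IsProper4Coloring gstarG c)
    (huv : c gstarU ≠ c gstarV) :
    ¬ ReachableWithin gstarG (bichromatic c (c gstarU) (c gstarV)) gstarU gstarV := by
  obtain ⟨σ, hσ⟩ := exists_isNormalized_perm_comp hc
  have hsep := hσ.not_reachableWithin (hc.perm_comp σ) (σ.injective.ne huv)
  rwa [Function.comp_apply, Function.comp_apply, bichromatic_perm_comp] at hsep

theorem exists_kempeEquiv_gstarU_eq_gstarV (hc : IsProper4Coloring gstarG c) :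
    ∃ d, KempeEquiv gstarG c d ∧ d gstarU = d gstarV := by
  by_cases huv : c gstarU = c gstarV
  · exact ⟨c, .refl c, huv⟩
  · exact exists_kempeEquiv_apply_eq_of_not_reachableWithin huv
      (not_reachableWithin_gstarU_gstarV hc huv)

theorem kempeEquiv_ringColoring_succ (i : Fin 5) :
    KempeEquiv gstarG (ringColoring i.castSucc) (ringColoring i.succ) := by
  let j : Fin 5 → Fin 4 := ![2, 1, 2, 1, 2]
  let k : Fin 5 → Fin 4 := ![3, 2, 3, 3, 3]
  let s : Fin 5 → Fin 12 := ![5, 10, 5, 4, 6]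
  have hexch : ∀ i, j i ≠ k i ∧ HasTwoChains gstarG (ringColoring i.castSucc) (j i) (k i) ∧
      ringColoring i.succ = chainExchange gstarG (ringColoring i.castSucc) (j i) (k i) (s i) := by
    decide +kernel
  obtain ⟨hjk, htwo, hsucc⟩ := hexch i
  rw [hsucc]
  exact kempeEquiv_chainExchange hjk htwo (s i)

theorem kempeEquiv_pairColoring_one :
    KempeEquiv gstarG (pairColoring 0) (pairColoring 1) := by
  have hexch : pairColoring 1 = chainExchange gstarG (pairColoring 0) 0 1 8 := by decide +kernel
  rw [hexch]
  exact kempeEquiv_chainExchange (by decide) (by decide +kernel) 8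

theorem kempeEquiv_ringColoring_perm_comp (i : Fin 6) (σ : Perm (Fin 4)) :
    KempeEquiv gstarG (ringColoring 0) (σ ∘ ringColoring i) := by
  induction i using Fin.induction with
  | zero => exact kempeEquiv_perm_comp 3 (by decide +kernel) σ
  | succ i ih => exact ih.trans ((kempeEquiv_ringColoring_succ i).perm_comp σ)

theorem kempeEquiv_pairColoring_perm_comp (i : Fin 2) (σ : Perm (Fin 4)) :
    KempeEquiv gstarG (pairColoring 0) (σ ∘ pairColoring i) := by
  have hσ : KempeEquiv gstarG (pairColoring 0) (σ ∘ pairColoring 0) :=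
    kempeEquiv_perm_comp 0 (by decide +kernel) σ
  fin_cases i
  · exact hσ
  · exact hσ.trans (kempeEquiv_pairColoring_one.perm_comp σ)

theorem kempeEquiv_ringColoring_or_pairColoring (hc : IsProper4Coloring gstarG c) :
    KempeEquiv gstarG (ringColoring 0) c ∨ KempeEquiv gstarG (pairColoring 0) c := by
  obtain ⟨d, hcd, hd_uv⟩ := exists_kempeEquiv_gstarU_eq_gstarV hc
  have hd : IsProper4Coloring gstarG d := hcd.isProper4Coloring_iff.1 hc
  obtain ⟨σ, hσ⟩ := exists_isNormalized_perm_comp hd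
  have hd_eq {e} (hde : σ ∘ d = e) : d = ⇑σ⁻¹ ∘ e := hde ▸ (inv_comp_comp σ d).symm
  rcases hσ.eq_ringColoring_or_eq_pairColoring (hd.perm_comp σ) (congrArg σ hd_uv) with
    ⟨i, hi⟩ | ⟨i, hi⟩
  · exact .inl ((hd_eq hi ▸ kempeEquiv_ringColoring_perm_comp i σ⁻¹).trans hcd.symm)
  · exact .inr ((hd_eq hi ▸ kempeEquiv_pairColoring_perm_comp i σ⁻¹).trans hcd.symm)

theorem kempeEquiv_gstarG_iff (hc : IsProper4Coloring gstarG c)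
    (hc' : IsProper4Coloring gstarG c') :
    KempeEquiv gstarG c c' ↔ (c gstarX = c gstarY ↔ c' gstarX = c' gstarY) := by
  refine ⟨fun h ↦ h.apply_eq_iff kempeLinked_gstarX_gstarY hc, fun h ↦ ?_⟩
  have ring_ne : ringColoring 0 gstarX ≠ ringColoring 0 gstarY := by decide
  have pair_eq : pairColoring 0 gstarX = pairColoring 0 gstarY := by decide
  have of_ring {d} (hd : KempeEquiv gstarG (ringColoring 0) d) : d gstarX ≠ d gstarY :=
    fun hxy ↦ ring_ne ((hd.apply_eq_iff kempeLinked_gstarX_gstarY (by decide +kernel)).2 hxy)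
  have of_pair {d} (hd : KempeEquiv gstarG (pairColoring 0) d) : d gstarX = d gstarY :=
    (hd.apply_eq_iff kempeLinked_gstarX_gstarY (by decide +kernel)).1 pair_eq
  rcases kempeEquiv_ringColoring_or_pairColoring hc with hring | hpair <;>
    rcases kempeEquiv_ringColoring_or_pairColoring hc' with hring' | hpair'
  · exact hring.symm.trans hring'
  · exact absurd (h.2 (of_pair hpair')) (of_ring hring)
  · exact absurd (h.1 (of_pair hpair)) (of_ring hring')
  · exact hpair.symm.trans hpair'

end GStar

/-- The parented a-graph `G*_uv` (icosahedron minus the edge `uv`, with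
the pair `(u, v) = (0, 1)` designated) does not belong to `A*`: each of the two Kempe
equivalence classes of its coloring states contains both a state with `c u = c v` and
a state with `c u ≠ c v`. -/
theorem stmt_15 :
    ¬ NoNSClass gstarG gstarU gstarV ∧
    ∃ A B : Set (Fin 12 → Fin 4),
      (∀ c ∈ A, IsProper4Coloring gstarG c) ∧
      (∀ c ∈ B, IsProper4Coloring gstarG c) ∧
      (∀ c : Fin 12 → Fin 4, IsProper4Coloring gstarG c → c ∈ A ∨ c ∈ B) ∧
      (∀ c ∈ A, c ∉ B) ∧
      (∀ c ∈ A, ∀ c' ∈ A, KempeEquiv gstarG c c') ∧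
      (∀ c ∈ B, ∀ c' ∈ B, KempeEquiv gstarG c c') ∧
      (∀ c ∈ A, ∀ c' ∈ B, ¬ KempeEquiv gstarG c c') ∧
      (∃ c ∈ A, c gstarU = c gstarV) ∧ (∃ c ∈ A, c gstarU ≠ c gstarV) ∧
      (∃ c ∈ B, c gstarU = c gstarV) ∧ (∃ c ∈ B, c gstarU ≠ c gstarV) := by
  have hring : IsProper4Coloring gstarG (ringColoring 0) := by decide +kernel
  have hpair : IsProper4Coloring gstarG (pairColoring 0) := by decide +kernel
  obtain ⟨c, hc, hc_xy, hc_uv⟩ : ∃ c, IsProper4Coloring gstarG c ∧ c gstarX ≠ c gstarY ∧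
      c gstarU ≠ c gstarV := ⟨![0, 1, 2, 1, 2, 3, 3, 0, 3, 0, 2, 1], by decide +kernel⟩
  obtain ⟨d, hd, hd_xy, hd_uv⟩ : ∃ d, IsProper4Coloring gstarG d ∧ d gstarX = d gstarY ∧
      d gstarU ≠ d gstarV := ⟨![0, 1, 2, 1, 3, 2, 0, 3, 0, 1, 3, 2], by decide +kernel⟩
  refine ⟨fun hA ↦ hc_uv ((hA (ringColoring 0) c hring hc ?_).1 (by decide)),
    {c | IsProper4Coloring gstarG c ∧ c gstarX ≠ c gstarY},
    {c | IsProper4Coloring gstarG c ∧ c gstarX = c gstarY},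
    fun _ ↦ And.left, fun _ ↦ And.left, fun c hc ↦ ?_, fun c hA hB ↦ hA.2 hB.2,
    fun c hc c' hc' ↦ (kempeEquiv_gstarG_iff hc.1 hc'.1).2 (iff_of_false hc.2 hc'.2),
    fun c hc c' hc' ↦ (kempeEquiv_gstarG_iff hc.1 hc'.1).2 (iff_of_true hc.2 hc'.2),
    fun c hc c' hc' h ↦ hc.2 (((kempeEquiv_gstarG_iff hc.1 hc'.1).1 h).2 hc'.2),
    ⟨ringColoring 0, ⟨hring, by decide⟩, by decide⟩, ⟨c, ⟨hc, hc_xy⟩, hc_uv⟩,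
    ⟨pairColoring 0, ⟨hpair, by decide⟩, by decide⟩, ⟨d, ⟨hd, hd_xy⟩, hd_uv⟩⟩
  · exact (kempeEquiv_gstarG_iff hring hc).2 (iff_of_false (by decide) hc_xy)
  · by_cases hxy : c gstarX = c gstarY
    · exact .inr ⟨hc, hxy⟩
    · exact .inl ⟨hc, hxy⟩
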